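/- arXiv:0904.3268 — 5 statements merged into one kernel-verified Lean document; each statement's English description precedes it below -/
import Mathlib

section
/- Let A be an ordered normed algebra over ℝ, let X be an ordered Banach space whose positive cone is closed, let J be a left ideal of A containing a positive m-bounded approximate left identity for itself, and let π : J → B(X) be a positive bounded algebra homomorphism making X a non-degenerate normed left J-module. Then the unique algebra homomorphism π̄ : A → B(X) extending π is positive, i.e., π̄(a) is a positive operator whenever a ≥ 0 in A. -/
open Filter Topology

/-!
For `a ≥ 0` and `x ≥ 0` the vectors `π̄ a (π eᵢ x) = π (a eᵢ) x` are positive, because `a eᵢ` is a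
positive element of `J`. Boundedness of `(eᵢ)` and non-degeneracy give `π eᵢ x → x`, so `π̄ a x` is
a limit of positive vectors and lies in the closed cone.
-/

theorem mapsTo_of_mapsTo_comp_of_tendsto {ι X Y : Type*} [TopologicalSpace X] [TopologicalSpace Y]
    {l : Filter ι} [l.NeBot] {T : ι → X → X} {S : X → Y} {C : Set X} {D : Set Y}
    (hS : Continuous S) (hD : IsClosed D) (hT : ∀ x ∈ C, Tendsto (fun i => T i x) l (𝓝 x))
    (hST : ∀ i, Set.MapsTo (S ∘ T i) C D) :
    Set.MapsTo S C D := fun x hx =>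
  hD.mem_of_tendsto ((hS.tendsto x).comp (hT x hx)) (.of_forall fun i => hST i hx)

theorem tendsto_apply_of_mem_span {ι R E F : Type*} [Semiring R]
    [AddCommMonoid E] [Module R E]
    [TopologicalSpace F] [AddCommMonoid F] [Module R F] [ContinuousAdd F] [ContinuousConstSMul R F]
    {l : Filter ι} {T : ι → E →ₗ[R] F} {S : E →ₗ[R] F} {s : Set E}
    (hs : ∀ x ∈ s, Tendsto (fun i => T i x) l (𝓝 (S x))) {x : E} (hx : x ∈ Submodule.span R s) :
    Tendsto (fun i => T i x) l (𝓝 (S x)) := by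
  induction hx using Submodule.span_induction with
  | mem x hx => exact hs x hx
  | zero => simpa only [map_zero] using tendsto_const_nhds
  | add x y _ _ hx hy => simpa only [map_add] using hx.add hy
  | smul c x _ hx => simpa only [map_smul] using hx.const_smul c

section NormedSpace

variable {ι 𝕜 X : Type*} [NontriviallyNormedField 𝕜] [SeminormedAddCommGroup X] [NormedSpace 𝕜 X]
  {l : Filter ι}

theorem tendsto_apply_of_norm_le_of_dense_span {Y : Type*} [SeminormedAddCommGroup Y]
    [NormedSpace 𝕜 Y] {T : ι → X →L[𝕜] Y} {S : X →L[𝕜] Y} {K : ℝ} {s : Set X}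
    (hT : ∀ i, ‖T i‖ ≤ K) (hdense : Dense (Submodule.span 𝕜 s : Set X))
    (hs : ∀ x ∈ s, Tendsto (fun i => T i x) l (𝓝 (S x))) (x : X) :
    Tendsto (fun i => T i x) l (𝓝 (S x)) := by
  have hequi : Equicontinuous ((↑) ∘ T : ι → X → Y) :=
    ((NormedSpace.equicontinuous_TFAE T).out 1 5 :).mpr ⟨K, hT⟩
  exact (hequi x).tendsto_of_mem_closure S.continuous.continuousWithinAt
    (fun y hy => tendsto_apply_of_mem_span (T := fun i => (T i : X →ₗ[𝕜] Y)) (S := S) hs hy)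
    (hdense x)

theorem tendsto_map_apply_of_approx_left_identity {J : Type*} [NonUnitalSeminormedRing J]
    [NormedSpace 𝕜 J] {e : ι → J} {m : ℝ} (he_bdd : ∀ i, ‖e i‖ ≤ m)
    (he_lim : ∀ j, Tendsto (fun i => e i * j) l (𝓝 j))
    {π : J →L[𝕜] X →L[𝕜] X} (hπmul : ∀ j k, π (j * k) = π j * π k)
    (hnd : Dense (Submodule.span 𝕜 (Set.range fun p : J × X => π p.1 p.2) : Set X)) (x : X) :
    Tendsto (fun i => π (e i) x) l (𝓝 x) := by
  refine tendsto_apply_of_norm_le_of_dense_span (S := .id 𝕜 X)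
    (fun i => π.le_opNorm_of_le (he_bdd i)) hnd ?_ x
  rintro _ ⟨⟨j, y⟩, rfl⟩
  have hcont : Continuous fun k => π k y := π.continuous.clm_apply continuous_const
  simpa only [Function.comp_def, hπmul, mul_apply_eq_comp, ContinuousLinearMap.id_apply]
    using (hcont.tendsto j).comp (he_lim j)

theorem positive_extension_from_left_ideal_general
    {A : Type*} [NonUnitalSeminormedRing A] [NormedSpace 𝕜 A] [l.NeBot]
    {PA : Set A} (hPA_mul : ∀ x ∈ PA, ∀ y ∈ PA, x * y ∈ PA)
    {PX : Set X} (hPX_closed : IsClosed PX)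
    {J : NonUnitalSubalgebra 𝕜 A} (hJideal : ∀ a : A, ∀ j ∈ J, a * j ∈ J)
    {m : ℝ} {e : ι → J} (he_bdd : ∀ i, ‖(e i : A)‖ ≤ m) (he_pos : ∀ i, (e i : A) ∈ PA)
    (he_lim : ∀ j : J, Tendsto (fun i => (e i : A) * (j : A)) l (𝓝 (j : A)))
    {π : J →L[𝕜] X →L[𝕜] X} (hπmul : ∀ j k : J, π (j * k) = π j * π k)
    (hπpos : ∀ j : J, (j : A) ∈ PA → ∀ x ∈ PX, π j x ∈ PX)
    (hnd : Dense (Submodule.span 𝕜 (Set.range fun p : J × X => π p.1 p.2) : Set X))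
    {πb : A → X →L[𝕜] X} (hπb_mul : ∀ a b : A, πb (a * b) = πb a * πb b)
    (hπb_ext : ∀ j : J, πb (j : A) = π j) :
    ∀ a ∈ PA, ∀ x ∈ PX, πb a x ∈ PX := by
  intro a ha
  let _ : NormedSpace 𝕜 J := { norm_smul_le := fun c j => norm_smul_le c (j : A) }
  have he_tendsto (x : X) : Tendsto (fun i => π (e i) x) l (𝓝 x) :=
    tendsto_map_apply_of_approx_left_identity (e := e) he_bdd
      (fun j => tendsto_subtype_rng.mpr (he_lim j)) hπmul hnd x
  refine mapsTo_of_mapsTo_comp_of_tendsto (πb a).continuous hPX_closed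
    (fun x _ => he_tendsto x) fun i x hx => ?_
  let ae : J := ⟨a * e i, hJideal a _ (e i).2⟩
  have hae : π ae = πb a * π (e i) := by rw [← hπb_ext, hπb_mul, hπb_ext]
  have hpos : π ae x ∈ PX := hπpos ae (hPA_mul a ha _ (he_pos i)) x hx
  rwa [hae] at hpos

end NormedSpace

/-- **Positivity of the extension.** Let `A` be an ordered real normed algebra (with positive
cone `PA` closed under addition, nonnegative scalar multiples and products), `X` an ordered
Banach space whose positive cone `PX` is closed, `J` a left ideal of `A` containing a positive
`m`-bounded approximate left identity for itself, and `π : J → B(X)` a positive bounded algebra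
homomorphism making `X` a non-degenerate normed left `J`-module. Then the unique algebra
homomorphism `π̄ : A → B(X)` extending `π` is positive. -/
theorem positive_extension_from_left_ideal
    {A : Type*} [NonUnitalNormedRing A] [NormedSpace ℝ A]
    [IsScalarTower ℝ A A] [SMulCommClass ℝ A A]
    (PA : Set A)
    (hPA_add : ∀ x ∈ PA, ∀ y ∈ PA, x + y ∈ PA)
    (hPA_smul : ∀ (c : ℝ), 0 ≤ c → ∀ x ∈ PA, c • x ∈ PA)
    (hPA_mul : ∀ x ∈ PA, ∀ y ∈ PA, x * y ∈ PA)
    {X : Type*} [NormedAddCommGroup X] [NormedSpace ℝ X] [CompleteSpace X]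
    (PX : Set X) (hPX_closed : IsClosed PX)
    (hPX_add : ∀ x ∈ PX, ∀ y ∈ PX, x + y ∈ PX)
    (hPX_smul : ∀ (c : ℝ), 0 ≤ c → ∀ x ∈ PX, c • x ∈ PX)
    (J : NonUnitalSubalgebra ℝ A)
    (hJideal : ∀ a : A, ∀ j ∈ J, a * j ∈ J)
    (m : ℝ) {ι : Type*} (l : Filter ι) [l.NeBot] (e : ι → J)
    (he_bdd : ∀ i, ‖(e i : A)‖ ≤ m)
    (he_pos : ∀ i, (e i : A) ∈ PA)
    (he_lim : ∀ j : J, Tendsto (fun i => (e i : A) * (j : A)) l (𝓝 (j : A)))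
    (π : J →L[ℝ] X →L[ℝ] X)
    (hπmul : ∀ j k : J, π (j * k) = π j * π k)
    (hπpos : ∀ j : J, (j : A) ∈ PA → ∀ x ∈ PX, π j x ∈ PX)
    (hnd : Dense (Submodule.span ℝ (Set.range fun p : J × X => π p.1 p.2) : Set X))
    (πb : A → X →L[ℝ] X)
    (hπb : IsLinearMap ℝ πb ∧ (∀ a b : A, πb (a * b) = πb a * πb b) ∧
      (∀ j : J, πb (j : A) = π j)) :
    ∀ a ∈ PA, ∀ x ∈ PX, πb a x ∈ PX := by
  exact positive_extension_from_left_ideal_general hPA_mul hPX_closed hJideal he_bdd he_pos he_lim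
    hπmul hπpos hnd hπb.2.1 hπb.2.2
end

section
/- Let A be a normed algebra over ℂ with a bounded involution and an m-bounded approximate left identity, let H be a complex Hilbert space, and let π_l : A → B(H) be a bounded involutive algebra homomorphism making H a non-degenerate normed left A-module. Then the double centralizer algebra M(A) carries the bounded involution (L,R)* = (R*, L*) (where L*(a) = (L(a*))* and R*(a) = (R(a*))*), the canonical homomorphism δ : A → M(A) is involutive, and the unique homomorphism π̄_l ∘ φ_l : M(A) → B(H) satisfying (π̄_l ∘ φ_l) ∘ δ = π_l is involutive: (π̄_l∘φ_l)((L,R)*) = ((π̄_l∘φ_l)((L,R)))* for all (L,R) ∈ M(A). -/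
open Filter Topology

/-- The left centralizer algebra `M_l(A)`. -/
def LeftCentralizers (𝕜 : Type*) (A : Type*) [RCLike 𝕜] [NonUnitalNormedRing A]
    [NormedSpace 𝕜 A] [IsScalarTower 𝕜 A A] [SMulCommClass 𝕜 A A] :
    Set (A →L[𝕜] A) :=
  {L | ∀ a b : A, L (a * b) = L a * b}

/-- The right centralizer algebra `M_r(A)`. -/
def RightCentralizers (𝕜 : Type*) (A : Type*) [RCLike 𝕜] [NonUnitalNormedRing A]
    [NormedSpace 𝕜 A] [IsScalarTower 𝕜 A A] [SMulCommClass 𝕜 A A] :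
    Set (A →L[𝕜] A) :=
  {R | ∀ a b : A, R (a * b) = a * R b}

/-- `(L, R)` is a double centralizer of `A`. -/
def IsDoubleCentralizer (𝕜 : Type*) {A : Type*} [RCLike 𝕜] [NonUnitalNormedRing A]
    [NormedSpace 𝕜 A] [IsScalarTower 𝕜 A A] [SMulCommClass 𝕜 A A]
    (L R : A →L[𝕜] A) : Prop :=
  L ∈ LeftCentralizers 𝕜 A ∧ R ∈ RightCentralizers 𝕜 A ∧ ∀ a b : A, a * L b = R a * b

/-!
An operator `S` on `H` is determined by the products `π(b)* S π(a)`, since the vectors `π(a)x` span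
a dense subspace. The extension `π̄` satisfies `π̄(L) π(a) = π(L a)` because `L ∘ λ(a) = λ(L a)`.
Hence, for a double centralizer `(L, R)`, we have `π(b)* π̄(R*) π(a) = π(b* R*(a))` and
`π(b)* π̄(L)* π(a) = π((L b)* a) = π(L*(b*) a)`. The two right-hand sides agree because `(R*, L*)`
is again a double centralizer.
-/

section StarConj

open WithConv

variable {R E F : Type*} [Semiring R] [InvolutiveStar R]
  [AddCommMonoid E] [Module R E] [StarAddMonoid E] [StarModule R E]
  [TopologicalSpace E] [ContinuousStar E]
  [AddCommMonoid F] [Module R F] [StarAddMonoid F] [StarModule R F]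
  [TopologicalSpace F] [ContinuousStar F]

/-- The conjugate `T*(a) = (T(a*))*` of a continuous linear map. This is Mathlib's intrinsic star,
which lives on the type synonym `WithConv (E →L[R] F)`, transported back to `E →L[R] F`. -/
def starConj (T : E →L[R] F) : E →L[R] F :=
  (star (toConv T)).ofConv

@[simp]
theorem starConj_apply (T : E →L[R] F) (a : E) : starConj T a = star (T (star a)) :=
  rfl

theorem eq_starConj {S T : E →L[R] F} (h : ∀ a, S a = star (T (star a))) : S = starConj T :=
  ContinuousLinearMap.ext h

end StarConj

section Norm

/-- The involution as a continuous conjugate-linear map, so that its boundedness is expressed by its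
operator norm. -/
abbrev starCLM (R E : Type*) [CommSemiring R] [StarRing R] [AddCommMonoid E] [StarAddMonoid E]
    [Module R E] [StarModule R E] [TopologicalSpace E] [ContinuousStar E] : E →L⋆[R] E :=
  (starL R).toContinuousLinearMap

theorem continuousStar_of_norm_star_le {E : Type*} [SeminormedAddCommGroup E] [StarAddMonoid E]
    {C : ℝ} (h : ∀ a : E, ‖star a‖ ≤ C * ‖a‖) : ContinuousStar E :=
  ⟨AddMonoidHomClass.continuous_of_bound (starAddEquiv : E ≃+ E) C h⟩

variable {𝕜 E F : Type*} [NontriviallyNormedField 𝕜] [StarRing 𝕜]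
  [RingHomIsometric (starRingEnd 𝕜)]
  [SeminormedAddCommGroup E] [NormedSpace 𝕜 E] [StarAddMonoid E] [StarModule 𝕜 E]
  [ContinuousStar E]
  [SeminormedAddCommGroup F] [NormedSpace 𝕜 F] [StarAddMonoid F] [StarModule 𝕜 F]
  [ContinuousStar F]

theorem norm_starConj_le (T : E →L[𝕜] F) :
    ‖starConj T‖ ≤ ‖starCLM 𝕜 F‖ * ‖starCLM 𝕜 E‖ * ‖T‖ :=
  calc ‖starConj T‖
      = ‖(starCLM 𝕜 F).comp (T.comp (starCLM 𝕜 E))‖ := rfl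
    _ ≤ ‖starCLM 𝕜 F‖ * (‖T‖ * ‖starCLM 𝕜 E‖) :=
      (ContinuousLinearMap.opNorm_comp_le _ _).trans <| by
        gcongr
        exact ContinuousLinearMap.opNorm_comp_le _ _
    _ = ‖starCLM 𝕜 F‖ * ‖starCLM 𝕜 E‖ * ‖T‖ := by ring

theorem max_norm_starConj_le (S T : E →L[𝕜] F) :
    max ‖starConj T‖ ‖starConj S‖ ≤
      ‖starCLM 𝕜 F‖ * ‖starCLM 𝕜 E‖ * max ‖S‖ ‖T‖ := by
  apply max_le
  · exact (norm_starConj_le T).trans (by gcongr; exact le_max_right _ _)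
  · exact (norm_starConj_le S).trans (by gcongr; exact le_max_left _ _)

end Norm

section Centralizers

variable {𝕜 A : Type*} [RCLike 𝕜] [NonUnitalNormedRing A] [NormedSpace 𝕜 A]
  [IsScalarTower 𝕜 A A] [SMulCommClass 𝕜 A A]

theorem mul_mem_leftCentralizers (a : A) :
    ContinuousLinearMap.mul 𝕜 A a ∈ LeftCentralizers 𝕜 A :=
  fun b c => (mul_assoc a b c).symm

theorem mul_mul_of_mem_leftCentralizers {L : A →L[𝕜] A} (hL : L ∈ LeftCentralizers 𝕜 A) (a : A) :
    L * ContinuousLinearMap.mul 𝕜 A a = ContinuousLinearMap.mul 𝕜 A (L a) :=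
  ContinuousLinearMap.ext (hL a)

section Extension

variable {B : Type*} [Mul B] {π : A → B} {πbl : LeftCentralizers 𝕜 A → B}

theorem extension_mul_map
    (hmul : ∀ (L K : LeftCentralizers 𝕜 A)
      (h : (L : A →L[𝕜] A) * K ∈ LeftCentralizers 𝕜 A),
      πbl ⟨(L : A →L[𝕜] A) * K, h⟩ = πbl L * πbl K)
    (hlam : ∀ (a : A) (h : ContinuousLinearMap.mul 𝕜 A a ∈ LeftCentralizers 𝕜 A),
      πbl ⟨ContinuousLinearMap.mul 𝕜 A a, h⟩ = π a)
    (L : LeftCentralizers 𝕜 A) (a : A) :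
    πbl L * π a = π (L.1 a) := by
  have hLa := mul_mul_of_mem_leftCentralizers L.2 a
  have hmem : L.1 * ContinuousLinearMap.mul 𝕜 A a ∈ LeftCentralizers 𝕜 A :=
    hLa ▸ mul_mem_leftCentralizers (L.1 a)
  calc πbl L * π a
      = πbl L * πbl ⟨ContinuousLinearMap.mul 𝕜 A a, mul_mem_leftCentralizers a⟩ := by rw [hlam]
    _ = πbl ⟨L.1 * ContinuousLinearMap.mul 𝕜 A a, hmem⟩ := (hmul L ⟨_, _⟩ hmem).symm
    _ = πbl ⟨ContinuousLinearMap.mul 𝕜 A (L.1 a), mul_mem_leftCentralizers _⟩ :=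
      congrArg πbl (Subtype.ext hLa)
    _ = π (L.1 a) := hlam _ _

theorem map_mul_of_extension
    (hmul : ∀ (L K : LeftCentralizers 𝕜 A)
      (h : (L : A →L[𝕜] A) * K ∈ LeftCentralizers 𝕜 A),
      πbl ⟨(L : A →L[𝕜] A) * K, h⟩ = πbl L * πbl K)
    (hlam : ∀ (a : A) (h : ContinuousLinearMap.mul 𝕜 A a ∈ LeftCentralizers 𝕜 A),
      πbl ⟨ContinuousLinearMap.mul 𝕜 A a, h⟩ = π a)
    (a b : A) :
    π (a * b) = π a * π b := by
  rw [← hlam a (mul_mem_leftCentralizers a), extension_mul_map hmul hlam,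
    ContinuousLinearMap.mul_apply']

end Extension

variable [StarRing A] [ContinuousStar A] [StarModule 𝕜 A]

theorem mul_star_eq_starConj_flip_mul (a : A) :
    ContinuousLinearMap.mul 𝕜 A (star a) = starConj ((ContinuousLinearMap.mul 𝕜 A).flip a) := by
  ext b
  simp

theorem flip_mul_star_eq_starConj_mul (a : A) :
    (ContinuousLinearMap.mul 𝕜 A).flip (star a) = starConj (ContinuousLinearMap.mul 𝕜 A a) := by
  ext b
  simp

theorem starConj_mem_leftCentralizers {R : A →L[𝕜] A} (hR : R ∈ RightCentralizers 𝕜 A) :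
    starConj R ∈ LeftCentralizers 𝕜 A := fun a b => by
  simp [hR (star b) (star a)]

theorem starConj_mem_rightCentralizers {L : A →L[𝕜] A} (hL : L ∈ LeftCentralizers 𝕜 A) :
    starConj L ∈ RightCentralizers 𝕜 A := fun a b => by
  simp [hL (star b) (star a)]

theorem IsDoubleCentralizer.starConj {L R : A →L[𝕜] A} (h : IsDoubleCentralizer 𝕜 L R) :
    IsDoubleCentralizer 𝕜 (starConj R) (starConj L) := by
  obtain ⟨hL, hR, hLR⟩ := h
  refine ⟨starConj_mem_leftCentralizers hR, starConj_mem_rightCentralizers hL, fun a b => ?_⟩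
  simpa using congrArg star (hLR (star b) (star a)).symm

end Centralizers

section Nondegenerate

theorem eq_of_forall_comp_eq {α R E F G : Type*} [Semiring R]
    [AddCommMonoid E] [Module R E] [TopologicalSpace E]
    [AddCommMonoid F] [Module R F] [TopologicalSpace F]
    [AddCommMonoid G] [Module R G] [TopologicalSpace G] [T2Space G]
    {f : α → E →L[R] F}
    (hf : Dense (Submodule.span R (Set.range fun p : α × E => f p.1 p.2) : Set F))
    {S T : F →L[R] G} (h : ∀ i, S ∘L f i = T ∘L f i) : S = T := by
  refine ContinuousLinearMap.ext_on hf ?_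
  rintro _ ⟨⟨i, x⟩, rfl⟩
  exact DFunLike.congr_fun (h i) x

variable {𝕜 H : Type*} [RCLike 𝕜] [NormedAddCommGroup H] [InnerProductSpace 𝕜 H] [CompleteSpace H]

theorem eq_of_forall_star_mul_mul_eq {α : Type*} {f : α → H →L[𝕜] H}
    (hf : Dense (Submodule.span 𝕜 (Set.range fun p : α × H => f p.1 p.2) : Set H))
    {S T : H →L[𝕜] H} (h : ∀ i j, star (f i) * S * f j = star (f i) * T * f j) : S = T := by
  have star_mul_eq (i : α) : star (f i) * S = star (f i) * T :=
    eq_of_forall_comp_eq hf (h i)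
  have star_eq : star S = star T := eq_of_forall_comp_eq hf fun i => by
    change star S * f i = star T * f i
    simpa using congrArg star (star_mul_eq i)
  exact star_injective star_eq

theorem eq_star_of_intertwining {A : Type*} [Mul A] [Star A] {π : A → H →L[𝕜] H}
    (hπmul : ∀ a b, π (a * b) = π a * π b) (hπstar : ∀ a, π (star a) = star (π a))
    (hnd : Dense (Submodule.span 𝕜 (Set.range fun p : A × H => π p.1 p.2) : Set H))
    {K L : A → A} (hKL : ∀ a b, star b * K a = star (L b) * a)
    {S T : H →L[𝕜] H} (hS : ∀ a, S * π a = π (K a)) (hT : ∀ a, T * π a = π (L a)) :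
    S = star T :=
  eq_of_forall_star_mul_mul_eq hnd fun b a =>
    calc star (π b) * S * π a
        = π (star b * K a) := by rw [mul_assoc, hS, ← hπstar, hπmul]
      _ = π (star (L b) * a) := by rw [hKL]
      _ = star (T * π b) * π a := by rw [hπmul, hπstar, hT]
      _ = star (π b) * star T * π a := by rw [star_mul]

end Nondegenerate

theorem extension_starConj_eq_star
    {𝕜 A H : Type*} [RCLike 𝕜] [NonUnitalNormedRing A] [NormedSpace 𝕜 A]
    [IsScalarTower 𝕜 A A] [SMulCommClass 𝕜 A A] [StarRing A] [ContinuousStar A] [StarModule 𝕜 A]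
    [NormedAddCommGroup H] [InnerProductSpace 𝕜 H] [CompleteSpace H]
    {π : A → H →L[𝕜] H} (hπstar : ∀ a, π (star a) = star (π a))
    (hnd : Dense (Submodule.span 𝕜 (Set.range fun p : A × H => π p.1 p.2) : Set H))
    {πbl : LeftCentralizers 𝕜 A → H →L[𝕜] H}
    (hmul : ∀ (L K : LeftCentralizers 𝕜 A)
      (h : (L : A →L[𝕜] A) * K ∈ LeftCentralizers 𝕜 A),
      πbl ⟨(L : A →L[𝕜] A) * K, h⟩ = πbl L * πbl K)
    (hlam : ∀ (a : A) (h : ContinuousLinearMap.mul 𝕜 A a ∈ LeftCentralizers 𝕜 A),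
      πbl ⟨ContinuousLinearMap.mul 𝕜 A a, h⟩ = π a)
    {L R : A →L[𝕜] A} (hLR : IsDoubleCentralizer 𝕜 L R) :
    πbl ⟨starConj R, hLR.starConj.1⟩ = star (πbl ⟨L, hLR.1⟩) := by
  have central (a b : A) : star b * starConj R a = star (L b) * a := by
    simpa only [starConj_apply, star_star] using hLR.starConj.2.2 (star b) a
  exact eq_star_of_intertwining (map_mul_of_extension hmul hlam) hπstar hnd central
    (extension_mul_map hmul hlam ⟨_, hLR.starConj.1⟩) (extension_mul_map hmul hlam ⟨L, hLR.1⟩)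

theorem double_centralizer_involutive_general
    {𝕜 A H : Type*} [RCLike 𝕜] [NonUnitalNormedRing A] [NormedSpace 𝕜 A]
    [IsScalarTower 𝕜 A A] [SMulCommClass 𝕜 A A] [StarRing A] [ContinuousStar A] [StarModule 𝕜 A]
    [NormedAddCommGroup H] [InnerProductSpace 𝕜 H] [CompleteSpace H]
    (π : A → H →L[𝕜] H)
    (hπstar : ∀ a : A, π (star a) = ContinuousLinearMap.adjoint (π a))
    (hnd : Dense (Submodule.span 𝕜 (Set.range fun p : A × H => π p.1 p.2) : Set H))
    (πbl : LeftCentralizers 𝕜 A → H →L[𝕜] H)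
    (hπbl_mul : ∀ (L K : LeftCentralizers 𝕜 A)
      (h : (L : A →L[𝕜] A) * K ∈ LeftCentralizers 𝕜 A),
      πbl ⟨(L : A →L[𝕜] A) * K, h⟩ = πbl L * πbl K)
    (hπbl_lam : ∀ (a : A) (h : ContinuousLinearMap.mul 𝕜 A a ∈ LeftCentralizers 𝕜 A),
      πbl ⟨ContinuousLinearMap.mul 𝕜 A a, h⟩ = π a) :
    (∀ L R : A →L[𝕜] A, IsDoubleCentralizer 𝕜 L R →
      ∃ Ls Rs : A →L[𝕜] A,
        (∀ a : A, Ls a = star (R (star a))) ∧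
        (∀ a : A, Rs a = star (L (star a))) ∧
        IsDoubleCentralizer 𝕜 Ls Rs) ∧
    (∃ C' : ℝ, ∀ L R : A →L[𝕜] A, IsDoubleCentralizer 𝕜 L R →
      ∀ Ls Rs : A →L[𝕜] A,
        (∀ a : A, Ls a = star (R (star a))) →
        (∀ a : A, Rs a = star (L (star a))) →
        max ‖Ls‖ ‖Rs‖ ≤ C' * max ‖L‖ ‖R‖) ∧
    (∀ a b : A,
      ContinuousLinearMap.mul 𝕜 A (star a) b
        = star ((ContinuousLinearMap.mul 𝕜 A).flip a (star b)) ∧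
      (ContinuousLinearMap.mul 𝕜 A).flip (star a) b
        = star (ContinuousLinearMap.mul 𝕜 A a (star b))) ∧
    (∀ (L R : A →L[𝕜] A) (hDC : IsDoubleCentralizer 𝕜 L R) (Ls : A →L[𝕜] A)
      (_ : ∀ a : A, Ls a = star (R (star a))) (hLs : Ls ∈ LeftCentralizers 𝕜 A),
      πbl ⟨Ls, hLs⟩ = ContinuousLinearMap.adjoint (πbl ⟨L, hDC.1⟩)) := by
  refine ⟨fun L R hLR => ?_,
    ⟨‖starCLM 𝕜 A‖ * ‖starCLM 𝕜 A‖, fun L R _ Ls Rs hLs hRs => ?_⟩,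
    fun a b => ⟨?_, ?_⟩, fun L R hLR Ls hLs _ => ?_⟩
  · exact ⟨starConj R, starConj L, starConj_apply R, starConj_apply L, hLR.starConj⟩
  · rw [eq_starConj hLs, eq_starConj hRs]
    exact max_norm_starConj_le L R
  · exact DFunLike.congr_fun (mul_star_eq_starConj_flip_mul a) b
  · exact DFunLike.congr_fun (flip_mul_star_eq_starConj_mul a) b
  · obtain rfl := eq_starConj hLs
    exact extension_starConj_eq_star hπstar hnd hπbl_mul hπbl_lam hLR

/-- **The involutive structure on the double centralizer algebra and involutivity of the
compatible Hilbert representation.** Let `A` be a complex normed algebra with a bounded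
involution and an `m`-bounded approximate left identity, `H` a complex Hilbert space, and
`π_l : A → B(H)` a bounded involutive homomorphism making `H` a non-degenerate normed left
`A`-module; let `π̄_l : M_l(A) → B(H)` be the canonical homomorphism with `π̄_l ∘ λ = π_l`.
Then `M(A)` carries the bounded involution `(L,R)* = (R*, L*)` (with `L*(a) = (L(a*))*`,
`R*(a) = (R(a*))*`), the canonical homomorphism `δ` is involutive, and `π̄_l ∘ φ_l` is
involutive: `(π̄_l∘φ_l)((L,R)*) = ((π̄_l∘φ_l)((L,R)))*`. -/
theorem double_centralizer_involutive
    {A : Type*} [NonUnitalNormedRing A] [NormedSpace ℂ A]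
    [IsScalarTower ℂ A A] [SMulCommClass ℂ A A]
    [StarRing A] [StarModule ℂ A]
    (C : ℝ) (hstar_bdd : ∀ a : A, ‖star a‖ ≤ C * ‖a‖)
    {H : Type*} [NormedAddCommGroup H] [InnerProductSpace ℂ H] [CompleteSpace H]
    (m : ℝ) {ι : Type*} (l : Filter ι) [l.NeBot] (e : ι → A)
    (he_bdd : ∀ i, ‖e i‖ ≤ m)
    (he_lim : ∀ a : A, Tendsto (fun i => e i * a) l (𝓝 a))
    (π : A →L[ℂ] H →L[ℂ] H)
    (hπmul : ∀ a b : A, π (a * b) = π a * π b)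
    (hπstar : ∀ a : A, π (star a) = ContinuousLinearMap.adjoint (π a))
    (hnd : Dense (Submodule.span ℂ (Set.range fun p : A × H => π p.1 p.2) : Set H))
    -- `π̄_l : M_l(A) → B(H)`, the canonical homomorphism with `π̄_l ∘ λ = π_l`
    (πbl : LeftCentralizers ℂ A → H →L[ℂ] H)
    (hπbl_add : ∀ (L K : LeftCentralizers ℂ A)
      (h : (L : A →L[ℂ] A) + K ∈ LeftCentralizers ℂ A),
      πbl ⟨(L : A →L[ℂ] A) + K, h⟩ = πbl L + πbl K)
    (hπbl_smul : ∀ (c : ℂ) (L : LeftCentralizers ℂ A)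
      (h : c • (L : A →L[ℂ] A) ∈ LeftCentralizers ℂ A),
      πbl ⟨c • (L : A →L[ℂ] A), h⟩ = c • πbl L)
    (hπbl_mul : ∀ (L K : LeftCentralizers ℂ A)
      (h : (L : A →L[ℂ] A) * K ∈ LeftCentralizers ℂ A),
      πbl ⟨(L : A →L[ℂ] A) * K, h⟩ = πbl L * πbl K)
    (hπbl_lam : ∀ (a : A) (h : ContinuousLinearMap.mul ℂ A a ∈ LeftCentralizers ℂ A),
      πbl ⟨ContinuousLinearMap.mul ℂ A a, h⟩ = π a) :
    -- `M(A)` carries the involution `(L,R)* = (R*, L*)` ...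
    (∀ L R : A →L[ℂ] A, IsDoubleCentralizer ℂ L R →
      ∃ Ls Rs : A →L[ℂ] A,
        (∀ a : A, Ls a = star (R (star a))) ∧
        (∀ a : A, Rs a = star (L (star a))) ∧
        IsDoubleCentralizer ℂ Ls Rs) ∧
    -- ... which is a bounded involution,
    (∃ C' : ℝ, ∀ L R : A →L[ℂ] A, IsDoubleCentralizer ℂ L R →
      ∀ Ls Rs : A →L[ℂ] A,
        (∀ a : A, Ls a = star (R (star a))) →
        (∀ a : A, Rs a = star (L (star a))) →
        max ‖Ls‖ ‖Rs‖ ≤ C' * max ‖L‖ ‖R‖) ∧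
    -- `δ : A → M(A)` is involutive,
    (∀ a b : A,
      ContinuousLinearMap.mul ℂ A (star a) b
        = star ((ContinuousLinearMap.mul ℂ A).flip a (star b)) ∧
      (ContinuousLinearMap.mul ℂ A).flip (star a) b
        = star (ContinuousLinearMap.mul ℂ A a (star b))) ∧
    -- and `π̄_l ∘ φ_l : M(A) → B(H)` is involutive.
    (∀ (L R : A →L[ℂ] A) (hDC : IsDoubleCentralizer ℂ L R) (Ls : A →L[ℂ] A)
      (_ : ∀ a : A, Ls a = star (R (star a))) (hLs : Ls ∈ LeftCentralizers ℂ A),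
      πbl ⟨Ls, hLs⟩ = ContinuousLinearMap.adjoint (πbl ⟨L, hDC.1⟩)) := by
  have : ContinuousStar A := continuousStar_of_norm_star_le hstar_bdd
  exact double_centralizer_involutive_general π hπstar hnd πbl hπbl_mul hπbl_lam
end

section
/- Let A be a normed algebra possessing a left approximate identity (not necessarily bounded). Then the following are equivalent: (a) there exist a normed space X and an injective bounded algebra homomorphism π_l : A → B(X) making X a non-degenerate (hence faithful) normed left A-module; (b) the canonical homomorphisms δ : A → M(A) and φ_l : M(A) → M_l(A) are both injective; (c) the canonical homomorphism λ : A → M_l(A) is injective. -/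
open Filter Topology

universe u v

/-!
On a non-degenerate module `X`, the operator `π a` is determined by its values
`π a (π c x) = π (a * c) x`, hence by `λ a`; so if `π` is injective, `λ` is. Conversely, `λ` makes
`A` a left module over itself, non-degenerate as soon as products span a dense subspace of `A`,
which a left approximate identity ensures. A double centralizer satisfies `R a * b = a * L b`, so
when `λ` is injective `L` determines `R`. In the other direction, if `λ a = λ b` then `ρ a` and
`ρ b` are partners of the same `L`, so injectivity of `φ_l` gives `δ a = δ b`.
-/

section Nondegenerate

/-- Non-degeneracy of the normed left module given by `π`: the vectors `π a x` span a dense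
subspace. Multiplicativity of `π` is not part of the definition. -/
def IsNondegenerate {𝕜 A X : Type*} [NontriviallyNormedField 𝕜] [SeminormedAddCommGroup A]
    [NormedSpace 𝕜 A] [SeminormedAddCommGroup X] [NormedSpace 𝕜 X] (π : A →L[𝕜] X →L[𝕜] X) : Prop :=
  Dense (Submodule.span 𝕜 (Set.range fun p : A × X => π p.1 p.2) : Set X)

variable {𝕜 A : Type*} [NontriviallyNormedField 𝕜] [NonUnitalSeminormedRing A] [NormedSpace 𝕜 A]
  [IsScalarTower 𝕜 A A] [SMulCommClass 𝕜 A A]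

theorem IsNondegenerate.injective_mul {X : Type*} [NormedAddCommGroup X] [NormedSpace 𝕜 X]
    {π : A →L[𝕜] X →L[𝕜] X} (hπ : IsNondegenerate π) (hπ_mul : ∀ a b, π (a * b) = π a * π b)
    (hinj : Function.Injective π) : Function.Injective (ContinuousLinearMap.mul 𝕜 A) := by
  intro a b hab
  have hmul (c : A) : a * c = b * c := DFunLike.congr_fun hab c
  refine hinj (ContinuousLinearMap.ext_on hπ ?_)
  rintro _ ⟨⟨c, x⟩, rfl⟩
  calc π a (π c x) = π (a * c) x := by rw [hπ_mul]; rfl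
    _ = π (b * c) x := by rw [hmul]
    _ = π b (π c x) := by rw [hπ_mul]; rfl

theorem isNondegenerate_mul_of_tendsto {ι : Type*} {l : Filter ι} [l.NeBot] {e : ι → A}
    (he : ∀ a, Tendsto (fun i => e i * a) l (𝓝 a)) :
    IsNondegenerate (ContinuousLinearMap.mul 𝕜 A) := fun a =>
  mem_closure_of_tendsto (he a) <| Eventually.of_forall fun i =>
    Submodule.subset_span ⟨(e i, a), rfl⟩

end Nondegenerate

section DoubleCentralizer

variable {𝕜 A : Type*} [RCLike 𝕜] [NonUnitalNormedRing A] [NormedSpace 𝕜 A]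
  [IsScalarTower 𝕜 A A] [SMulCommClass 𝕜 A A]

theorem isDoubleCentralizer_mul_flip_mul (a : A) :
    IsDoubleCentralizer 𝕜 (ContinuousLinearMap.mul 𝕜 A a)
      ((ContinuousLinearMap.mul 𝕜 A).flip a) :=
  ⟨fun b c => (mul_assoc a b c).symm, fun b c => mul_assoc b c a, fun b c => (mul_assoc b a c).symm⟩

theorem IsDoubleCentralizer.right_unique
    (hmul : Function.Injective (ContinuousLinearMap.mul 𝕜 A)) {L R R' : A →L[𝕜] A}
    (hR : IsDoubleCentralizer 𝕜 L R) (hR' : IsDoubleCentralizer 𝕜 L R') : R = R' := by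
  obtain ⟨-, -, hLR⟩ := hR
  obtain ⟨-, -, hLR'⟩ := hR'
  ext a
  refine hmul (ContinuousLinearMap.ext fun b => ?_)
  exact (hLR a b).symm.trans (hLR' a b)

theorem injective_mul_prod_flip_mul_and_right_unique_iff :
    (Function.Injective (fun a : A =>
        (ContinuousLinearMap.mul 𝕜 A a, (ContinuousLinearMap.mul 𝕜 A).flip a)) ∧
      ∀ L R R' : A →L[𝕜] A, IsDoubleCentralizer 𝕜 L R → IsDoubleCentralizer 𝕜 L R' →
        R = R') ↔
      Function.Injective (ContinuousLinearMap.mul 𝕜 A) := by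
  constructor
  · rintro ⟨hδ, hφ⟩ a b hab
    have hb : IsDoubleCentralizer 𝕜 (ContinuousLinearMap.mul 𝕜 A a)
        ((ContinuousLinearMap.mul 𝕜 A).flip b) :=
      hab ▸ isDoubleCentralizer_mul_flip_mul b
    exact hδ (Prod.ext hab (hφ _ _ _ (isDoubleCentralizer_mul_flip_mul a) hb))
  · intro hmul
    exact ⟨fun a b hab => hmul (congrArg Prod.fst hab),
      fun _ _ _ hR hR' => hR.right_unique hmul hR'⟩

end DoubleCentralizer

theorem faithful_module_iff_lambda_injective_general
    {𝕜 : Type v} [RCLike 𝕜] {A : Type u} [NonUnitalNormedRing A] [NormedSpace 𝕜 A]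
    [IsScalarTower 𝕜 A A] [SMulCommClass 𝕜 A A]
    (hA : IsNondegenerate (ContinuousLinearMap.mul 𝕜 A)) :
    ((∃ (X : Type u) (_ : NormedAddCommGroup X) (_ : NormedSpace 𝕜 X)
        (π : A →L[𝕜] X →L[𝕜] X),
        (∀ a b : A, π (a * b) = π a * π b) ∧ Function.Injective π ∧ IsNondegenerate π) ↔
      (Function.Injective (fun a : A =>
          (ContinuousLinearMap.mul 𝕜 A a, (ContinuousLinearMap.mul 𝕜 A).flip a)) ∧
        ∀ L R R' : A →L[𝕜] A, IsDoubleCentralizer 𝕜 L R → IsDoubleCentralizer 𝕜 L R' →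
          R = R')) ∧
    ((Function.Injective (fun a : A =>
        (ContinuousLinearMap.mul 𝕜 A a, (ContinuousLinearMap.mul 𝕜 A).flip a)) ∧
      ∀ L R R' : A →L[𝕜] A, IsDoubleCentralizer 𝕜 L R → IsDoubleCentralizer 𝕜 L R' →
        R = R') ↔
      Function.Injective (ContinuousLinearMap.mul 𝕜 A)) := by
  refine ⟨?_, injective_mul_prod_flip_mul_and_right_unique_iff⟩
  rw [injective_mul_prod_flip_mul_and_right_unique_iff]
  constructor
  · rintro ⟨X, _, _, π, hπ_mul, hinj, hπ⟩
    exact hπ.injective_mul hπ_mul hinj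
  · intro hmul
    exact ⟨A, inferInstance, inferInstance, ContinuousLinearMap.mul 𝕜 A,
      map_mul (NonUnitalAlgHom.Lmul 𝕜 A), hmul, hA⟩

/-- **Existence of faithful non-degenerate left modules and injectivity of the canonical
maps.** Let `A` be a normed algebra with a (not necessarily bounded) left approximate
identity. The following are equivalent: (a) there exist a normed space `X` and an injective
bounded algebra homomorphism `π_l : A → B(X)` making `X` a non-degenerate (hence faithful)
normed left `A`-module; (b) the canonical homomorphisms `δ : A → M(A)` and
`φ_l : M(A) → M_l(A)` are both injective; (c) the canonical homomorphism `λ : A → M_l(A)`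
is injective. -/
theorem faithful_module_iff_lambda_injective
    {𝕜 : Type v} [RCLike 𝕜]
    {A : Type u} [NonUnitalNormedRing A] [NormedSpace 𝕜 A]
    [IsScalarTower 𝕜 A A] [SMulCommClass 𝕜 A A]
    {ι : Type*} (l : Filter ι) [l.NeBot] (e : ι → A)
    (he_lim : ∀ a : A, Tendsto (fun i => e i * a) l (𝓝 a)) :
    ((∃ (X : Type u) (_ : NormedAddCommGroup X) (_ : NormedSpace 𝕜 X)
        (π : A →L[𝕜] X →L[𝕜] X),
        (∀ a b : A, π (a * b) = π a * π b) ∧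
        Function.Injective π ∧
        Dense (Submodule.span 𝕜 (Set.range fun p : A × X => π p.1 p.2) : Set X)) ↔
      (Function.Injective (fun a : A =>
          (ContinuousLinearMap.mul 𝕜 A a, (ContinuousLinearMap.mul 𝕜 A).flip a)) ∧
        ∀ L R R' : A →L[𝕜] A, IsDoubleCentralizer 𝕜 L R → IsDoubleCentralizer 𝕜 L R' →
          R = R')) ∧
    ((Function.Injective (fun a : A =>
        (ContinuousLinearMap.mul 𝕜 A a, (ContinuousLinearMap.mul 𝕜 A).flip a)) ∧
      ∀ L R R' : A →L[𝕜] A, IsDoubleCentralizer 𝕜 L R → IsDoubleCentralizer 𝕜 L R' →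
        R = R') ↔
      Function.Injective (fun a : A => ContinuousLinearMap.mul 𝕜 A a)) :=
  faithful_module_iff_lambda_injective_general (isNondegenerate_mul_of_tendsto he_lim)
end

section
/- Let X be a normed space, let A be a normed algebra with an m-bounded approximate left identity (or, alternatively, an m-bounded approximate right identity), and let π : A → B(X) be a bounded homomorphism (resp. anti-homomorphism) making X a non-degenerate normed left (resp. right) A-module. For T in the left normalizer N_l(π(A), B(X)) let ‖λ(T)‖ = sup{‖Tπ(a)‖ : ‖π(a)‖ ≤ 1, a ∈ A} be the norm of left multiplication by T as an element of M_l(π(A)); for T in the right normalizer N_r(π(A), B(X)) define ‖ρ(T)‖ analogously. Then ‖λ(T)‖ ≤ ‖T‖ ≤ m‖π‖·‖λ(T)‖ for T ∈ N_l(π(A), B(X)), and ‖ρ(T)‖ ≤ ‖T‖ ≤ m‖π‖·‖ρ(T)‖ for T ∈ N_r(π(A), B(X)); in particular the operator norm from B(X) and the centralizer norm are equivalent on N_l(π(A), B(X)), on N_r(π(A), B(X)), and on N(π(A), B(X)). -/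
open Filter Topology

/-!
If `π (eᵢ) → 1` strongly, then `T * π (eᵢ) → T` and `π (eᵢ) * T → T` strongly. The norms along
these nets are at most `m * ‖π‖ * ‖λ(T)‖` and `m * ‖π‖ * ‖ρ(T)‖`, and a norm bound passes to strong
limits. The convergence `π (eᵢ) → 1` holds on the vectors `π a x` because `(eᵢ)` is an approximate
identity, hence on all of `X` because these span a dense subspace and `(π (eᵢ))` is bounded.
-/

section StrongConvergence

variable {𝕜 : Type*} [NontriviallyNormedField 𝕜]
  {E : Type*} [SeminormedAddCommGroup E] [NormedSpace 𝕜 E]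
  {F : Type*} [SeminormedAddCommGroup F] [NormedSpace 𝕜 F]
  {ι : Type*} {l : Filter ι}

theorem opNorm_le_of_tendsto_apply [l.NeBot] {S : ι → E →L[𝕜] F} {T : E →L[𝕜] F} {C : ℝ}
    (hS : ∀ i, ‖S i‖ ≤ C) (h : ∀ x, Tendsto (fun i => S i x) l (𝓝 (T x))) : ‖T‖ ≤ C := by
  obtain ⟨i⟩ : Nonempty ι := l.nonempty_of_neBot
  refine T.opNorm_le_bound ((norm_nonneg _).trans (hS i)) fun x => ?_
  exact le_of_tendsto' (h x).norm fun i => (S i).le_of_opNorm_le (hS i) x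

theorem tendsto_apply_of_dense_span {S : ι → E →L[𝕜] F} {T : E →L[𝕜] F} {C : ℝ}
    (hS : ∀ i, ‖S i‖ ≤ C) {s : Set E} (hs : Dense (Submodule.span 𝕜 s : Set E))
    (h : ∀ x ∈ s, Tendsto (fun i => S i x) l (𝓝 (T x))) (x : E) :
    Tendsto (fun i => S i x) l (𝓝 (T x)) := by
  have tendsto_on_span : ∀ y ∈ Submodule.span 𝕜 s, Tendsto (fun i => S i y) l (𝓝 (T y)) := by
    intro y hy
    induction hy using Submodule.span_induction with
    | mem y hy => exact h y hy
    | zero => simpa only [map_zero] using tendsto_const_nhds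
    | add u v _ _ hu hv => simpa only [map_add] using hu.add hv
    | smul c u _ hu => simpa only [map_smul] using hu.const_smul c
  have equicontinuous : Equicontinuous ((↑) ∘ S : ι → E → F) :=
    ((NormedSpace.equicontinuous_TFAE S).out 5 1).1 (⟨C, hS⟩ : ∃ C, ∀ i, ‖S i‖ ≤ C)
  exact (equicontinuous x).tendsto_of_mem_closure T.continuous.continuousWithinAt
    tendsto_on_span (hs x)

theorem tendsto_apply_self_of_tendsto_mul {A : Type*} {π : A → E →L[𝕜] E}
    (hnd : Dense (Submodule.span 𝕜 (Set.range fun p : A × E => π p.1 p.2) : Set E))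
    {S : ι → E →L[𝕜] E} {C : ℝ} (hS : ∀ i, ‖S i‖ ≤ C)
    (h : ∀ a, Tendsto (fun i => S i * π a) l (𝓝 (π a))) (x : E) :
    Tendsto (fun i => S i x) l (𝓝 x) := by
  refine tendsto_apply_of_dense_span (T := .id 𝕜 E) hS hnd ?_ x
  rintro _ ⟨⟨a, z⟩, rfl⟩
  exact ((ContinuousLinearMap.apply 𝕜 E z).continuous.tendsto (π a)).comp (h a)

end StrongConvergence

section Multiplication

variable {𝕜 : Type*} [NontriviallyNormedField 𝕜]
  {R : Type*} [NonUnitalSeminormedRing R] [NormedSpace 𝕜 R] [IsScalarTower 𝕜 R R]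
  [SMulCommClass 𝕜 R R] (V : Submodule 𝕜 R) (T : R)

/-- Left multiplication by `T` as a bounded operator on a subspace `V` of a normed algebra `R`,
the `λ(T)` of the theorem for `V = π(A)`. It takes values in `R` instead of `V`, so that it is
defined for every `T`; when `T` normalizes `V` this does not affect its norm. -/
noncomputable def leftMulOn : V →L[𝕜] R :=
  (ContinuousLinearMap.mul 𝕜 R T).comp V.subtypeL

/-- Right multiplication by `T` as a bounded operator on a subspace `V` of a normed algebra `R`,
the `ρ(T)` of the theorem for `V = π(A)`. As for `leftMulOn`, its values are taken in `R`. -/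
noncomputable def rightMulOn : V →L[𝕜] R :=
  ((ContinuousLinearMap.mul 𝕜 R).flip T).comp V.subtypeL

theorem norm_leftMulOn_le : ‖leftMulOn V T‖ ≤ ‖T‖ :=
  ContinuousLinearMap.opNorm_le_bound _ (norm_nonneg T) fun S => norm_mul_le T S

theorem norm_rightMulOn_le : ‖rightMulOn V T‖ ≤ ‖T‖ :=
  ContinuousLinearMap.opNorm_le_bound _ (norm_nonneg T) fun S =>
    (norm_mul_le (S : R) T).trans_eq (mul_comm _ _)

variable {V}

theorem norm_mul_le_norm_leftMulOn_mul {S : R} (hS : S ∈ V) :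
    ‖T * S‖ ≤ ‖leftMulOn V T‖ * ‖S‖ :=
  (leftMulOn V T).le_opNorm ⟨S, hS⟩

theorem norm_mul_le_norm_rightMulOn_mul {S : R} (hS : S ∈ V) :
    ‖S * T‖ ≤ ‖rightMulOn V T‖ * ‖S‖ :=
  (rightMulOn V T).le_opNorm ⟨S, hS⟩

end Multiplication

section UnitBall

variable {𝕜 : Type*} [DenselyNormedField 𝕜] {A : Type*} [AddCommGroup A] [Module 𝕜 A]

theorem sSup_norm_rangeRestrict_eq_norm {E F : Type*}
    [NormedAddCommGroup E] [NormedSpace 𝕜 E] [SeminormedAddCommGroup F] [NormedSpace 𝕜 F]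
    (π : A →ₗ[𝕜] E) (L : π.range →L[𝕜] F) :
    sSup ((fun a => ‖L (π.rangeRestrict a)‖) '' {a | ‖π a‖ ≤ 1}) = ‖L‖ := by
  have image_eq_closedBall : π.rangeRestrict '' {a | ‖π a‖ ≤ 1} = Metric.closedBall 0 1 := by
    rw [← Set.image_preimage_eq (Metric.closedBall 0 1) π.surjective_rangeRestrict]
    congr 1
    ext a
    simp
  rw [← L.sSup_unitClosedBall_eq_norm, ← image_eq_closedBall, Set.image_image]

variable {R : Type*} [NonUnitalNormedRing R] [NormedSpace 𝕜 R] [IsScalarTower 𝕜 R R]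
  [SMulCommClass 𝕜 R R] (π : A →ₗ[𝕜] R) (T : R)

theorem sSup_norm_mul_eq_norm_leftMulOn :
    sSup ((fun a => ‖T * π a‖) '' {a | ‖π a‖ ≤ 1}) = ‖leftMulOn π.range T‖ :=
  sSup_norm_rangeRestrict_eq_norm π (leftMulOn π.range T)

theorem sSup_norm_mul_eq_norm_rightMulOn :
    sSup ((fun a => ‖π a * T‖) '' {a | ‖π a‖ ≤ 1}) = ‖rightMulOn π.range T‖ :=
  sSup_norm_rangeRestrict_eq_norm π (rightMulOn π.range T)

end UnitBall

section StrongApproximateIdentity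

variable {𝕜 : Type*} [NontriviallyNormedField 𝕜] {X : Type*} [SeminormedAddCommGroup X]
  [NormedSpace 𝕜 X] {ι : Type*} {l : Filter ι} [l.NeBot] {V : Submodule 𝕜 (X →L[𝕜] X)}
  {S : ι → X →L[𝕜] X} {C : ℝ}

theorem norm_le_mul_norm_leftMulOn (hSV : ∀ i, S i ∈ V) (hS : ∀ i, ‖S i‖ ≤ C)
    (h : ∀ x, Tendsto (fun i => S i x) l (𝓝 x)) (T : X →L[𝕜] X) :
    ‖T‖ ≤ C * ‖leftMulOn V T‖ := by
  refine opNorm_le_of_tendsto_apply (S := fun i => T * S i) (fun i => ?_)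
    fun x => (T.continuous.tendsto x).comp (h x)
  calc ‖T * S i‖ ≤ ‖leftMulOn V T‖ * ‖S i‖ := norm_mul_le_norm_leftMulOn_mul T (hSV i)
    _ ≤ ‖leftMulOn V T‖ * C := by gcongr; exact hS i
    _ = C * ‖leftMulOn V T‖ := mul_comm _ _

theorem norm_le_mul_norm_rightMulOn (hSV : ∀ i, S i ∈ V) (hS : ∀ i, ‖S i‖ ≤ C)
    (h : ∀ x, Tendsto (fun i => S i x) l (𝓝 x)) (T : X →L[𝕜] X) :
    ‖T‖ ≤ C * ‖rightMulOn V T‖ := by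
  refine opNorm_le_of_tendsto_apply (S := fun i => S i * T) (fun i => ?_) fun x => h (T x)
  calc ‖S i * T‖ ≤ ‖rightMulOn V T‖ * ‖S i‖ := norm_mul_le_norm_rightMulOn_mul T (hSV i)
    _ ≤ ‖rightMulOn V T‖ * C := by gcongr; exact hS i
    _ = C * ‖rightMulOn V T‖ := mul_comm _ _

end StrongApproximateIdentity

theorem normalizer_norms_equivalent_general
    {𝕜 : Type*} [DenselyNormedField 𝕜]
    {A : Type*} [NonUnitalSeminormedRing A] [NormedSpace 𝕜 A]
    {X : Type*} [NormedAddCommGroup X] [NormedSpace 𝕜 X]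
    (m : ℝ) {ι : Type*} (l : Filter ι) [l.NeBot] (e : ι → A)
    (he_bdd : ∀ i, ‖e i‖ ≤ m)
    (π : A →L[𝕜] X →L[𝕜] X)
    (hcase :
      ((∀ a b : A, π (a * b) = π a * π b) ∧
        ∀ a : A, Tendsto (fun i => e i * a) l (𝓝 a)) ∨
      ((∀ a b : A, π (a * b) = π b * π a) ∧
        ∀ a : A, Tendsto (fun i => a * e i) l (𝓝 a)))
    (hnd : Dense (Submodule.span 𝕜 (Set.range fun p : A × X => π p.1 p.2) : Set X))
    (T : X →L[𝕜] X) :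
    (sSup ((fun a : A => ‖T * π a‖) '' {a : A | ‖π a‖ ≤ 1}) ≤ ‖T‖ ∧
      ‖T‖ ≤ m * ‖π‖ * sSup ((fun a : A => ‖T * π a‖) '' {a : A | ‖π a‖ ≤ 1})) ∧
    (sSup ((fun a : A => ‖π a * T‖) '' {a : A | ‖π a‖ ≤ 1}) ≤ ‖T‖ ∧
      ‖T‖ ≤ m * ‖π‖ * sSup ((fun a : A => ‖π a * T‖) '' {a : A | ‖π a‖ ≤ 1})) := by
  have norm_le (i : ι) : ‖π (e i)‖ ≤ m * ‖π‖ :=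
    (π.le_opNorm_of_le (he_bdd i)).trans_eq (mul_comm _ _)
  have tendsto_mul (a : A) : Tendsto (fun i => π (e i) * π a) l (𝓝 (π a)) := by
    rcases hcase with ⟨π_mul, approx⟩ | ⟨π_mul, approx⟩ <;>
      simpa only [Function.comp_def, π_mul] using (π.continuous.tendsto a).comp (approx a)
  have tendsto_apply := tendsto_apply_self_of_tendsto_mul hnd norm_le tendsto_mul
  have mem_range (i : ι) : π (e i) ∈ π.toLinearMap.range := ⟨e i, rfl⟩
  have sSup_left := sSup_norm_mul_eq_norm_leftMulOn π.toLinearMap T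
  have sSup_right := sSup_norm_mul_eq_norm_rightMulOn π.toLinearMap T
  simp only [ContinuousLinearMap.coe_coe] at sSup_left sSup_right
  rw [sSup_left, sSup_right]
  exact ⟨⟨norm_leftMulOn_le _ T, norm_le_mul_norm_leftMulOn mem_range norm_le tendsto_apply T⟩,
    ⟨norm_rightMulOn_le _ T, norm_le_mul_norm_rightMulOn mem_range norm_le tendsto_apply T⟩⟩

/-- **Equivalence of the two canonical norms on normalizers.** Let `X` be a normed space and
`A` a normed algebra with an `m`-bounded approximate left identity (or, alternatively, an
`m`-bounded approximate right identity), and let `π : A → B(X)` be a bounded homomorphism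
(resp. anti-homomorphism) making `X` a non-degenerate normed left (resp. right) `A`-module.
For `T` in the left normalizer of `π(A)` let `‖λ(T)‖ = sup{‖Tπ(a)‖ : ‖π(a)‖ ≤ 1}`, the norm
of left multiplication by `T` as an element of `M_l(π(A))`; for `T` in the right normalizer
define `‖ρ(T)‖` analogously. Then `‖λ(T)‖ ≤ ‖T‖ ≤ m‖π‖·‖λ(T)‖` on `N_l(π(A), B(X))` and
`‖ρ(T)‖ ≤ ‖T‖ ≤ m‖π‖·‖ρ(T)‖` on `N_r(π(A), B(X))`; in particular the operator norm of
`B(X)` and the centralizer norm are equivalent on `N_l`, `N_r` and `N`. -/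
theorem normalizer_norms_equivalent
    {𝕜 : Type*} [RCLike 𝕜]
    {A : Type*} [NonUnitalNormedRing A] [NormedSpace 𝕜 A]
    [IsScalarTower 𝕜 A A] [SMulCommClass 𝕜 A A]
    {X : Type*} [NormedAddCommGroup X] [NormedSpace 𝕜 X]
    (m : ℝ) {ι : Type*} (l : Filter ι) [l.NeBot] (e : ι → A)
    (he_bdd : ∀ i, ‖e i‖ ≤ m)
    (π : A →L[𝕜] X →L[𝕜] X)
    (hcase :
      ((∀ a b : A, π (a * b) = π a * π b) ∧
        ∀ a : A, Tendsto (fun i => e i * a) l (𝓝 a)) ∨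
      ((∀ a b : A, π (a * b) = π b * π a) ∧
        ∀ a : A, Tendsto (fun i => a * e i) l (𝓝 a)))
    (hnd : Dense (Submodule.span 𝕜 (Set.range fun p : A × X => π p.1 p.2) : Set X)) :
    (∀ T : X →L[𝕜] X, (∀ a : A, ∃ b : A, T * π a = π b) →
      sSup ((fun a : A => ‖T * π a‖) '' {a : A | ‖π a‖ ≤ 1}) ≤ ‖T‖ ∧
      ‖T‖ ≤ m * ‖π‖ * sSup ((fun a : A => ‖T * π a‖) '' {a : A | ‖π a‖ ≤ 1})) ∧
    (∀ T : X →L[𝕜] X, (∀ a : A, ∃ b : A, π a * T = π b) →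
      sSup ((fun a : A => ‖π a * T‖) '' {a : A | ‖π a‖ ≤ 1}) ≤ ‖T‖ ∧
      ‖T‖ ≤ m * ‖π‖ * sSup ((fun a : A => ‖π a * T‖) '' {a : A | ‖π a‖ ≤ 1})) := by
  have bounds := normalizer_norms_equivalent_general m l e he_bdd π hcase hnd
  exact ⟨fun T _ => (bounds T).1, fun T _ => (bounds T).2⟩
end

section
/- Let A be a normed algebra with an m-bounded approximate left identity, let X be a Banach space, and let π_l : A → B(X) be an injective bounded algebra homomorphism making X a non-degenerate faithful normed left A-module, such that the inverse π_l^{-1} : π_l(A) → A is bounded. Then the unique homomorphism π̄_l : M_l(A) → B(X) with π̄_l ∘ λ = π_l is an algebra isomorphism from M_l(A) onto the left normalizer N_l(π_l(A), B(X)); when N_l(π_l(A), B(X)) carries the operator norm of B(X), π̄_l is bounded with ‖π̄_l‖ ≤ m‖π_l‖ and its inverse is bounded with ‖π̄_l^{-1}‖ ≤ ‖π_l‖·‖π_l^{-1}‖, the inverse being given by π̄_l^{-1}(T)(a) = π_l^{-1}(T π_l(a)) for T ∈ N_l(π_l(A), B(X)) and a ∈ A. -/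
open Filter Topology

/-!
Everything follows from the identity `π̄(L) π(a) = π(L a)`, the image under `π̄` of
`L ∘ λ(a) = λ(L a)`. It recovers `L` from `π̄(L)` because `π` is bounded below, and it determines
`π̄(L)` by non-degeneracy. Since `π(eᵢ) → 1` strongly on the dense subspace `π(A)X`, it also
exhibits `π̄(L)` there as the strong limit of the operators `π(L eᵢ)`, whose norms are at most
`m ‖π‖ ‖L‖`.
-/

section BoundedBelow

variable {𝕜 E F G : Type*} [NontriviallyNormedField 𝕜]
  [SeminormedAddCommGroup E] [NormedSpace 𝕜 E] [NormedAddCommGroup F] [NormedSpace 𝕜 F]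
  [SeminormedAddCommGroup G] [NormedSpace 𝕜 G] {f : F →L[𝕜] G} {C : ℝ}

theorem injective_of_norm_le_mul_norm_map (hf : ∀ x, ‖x‖ ≤ C * ‖f x‖) :
    Function.Injective f :=
  (injective_iff_map_eq_zero f).2 fun x hx => norm_le_zero_iff.1 <| by
    simpa only [hx, norm_zero, mul_zero] using hf x

theorem exists_comp_eq_of_range_subset (hf : ∀ x, ‖x‖ ≤ C * ‖f x‖) (S : E →L[𝕜] G)
    (hS : Set.range S ⊆ Set.range f) : ∃ L : E →L[𝕜] F, f.comp L = S := by
  have injective_f : Function.Injective f.toLinearMap := injective_of_norm_le_mul_norm_map hf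
  let L : E →ₗ[𝕜] F :=
    (LinearEquiv.ofInjective f.toLinearMap injective_f).symm.toLinearMap ∘ₗ
      S.toLinearMap.codRestrict f.range fun x => hS ⟨x, rfl⟩
  have map_L (x : E) : f (L x) = S x :=
    LinearEquiv.ofInjective_symm_apply f.toLinearMap (h := injective_f) _
  have norm_L_le (x : E) : ‖L x‖ ≤ |C| * ‖S‖ * ‖x‖ :=
    calc ‖L x‖ ≤ C * ‖f (L x)‖ := hf _
      _ ≤ |C| * ‖S x‖ := by rw [map_L]; gcongr; exact le_abs_self C
      _ ≤ |C| * (‖S‖ * ‖x‖) := by gcongr; exact S.le_opNorm x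
      _ = |C| * ‖S‖ * ‖x‖ := (mul_assoc ..).symm
  exact ⟨L.mkContinuous _ norm_L_le, ContinuousLinearMap.ext map_L⟩

end BoundedBelow

section Implements

variable {𝕜 A X : Type*} [NontriviallyNormedField 𝕜]

section Module

variable [SeminormedAddCommGroup A] [NormedSpace 𝕜 A] [SeminormedAddCommGroup X] [NormedSpace 𝕜 X]

/-- The operator `T` on `X` implements the map `L` on `A` through `π : A → B(X)`: acting by `L`
on `A` corresponds to multiplying by `T` on the left in `B(X)`. -/
def Implements (π : A →L[𝕜] X →L[𝕜] X) (T : X →L[𝕜] X) (L : A →L[𝕜] A) : Prop :=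
  ∀ a, T * π a = π (L a)

theorem Implements.opNorm_map_le {π : A →L[𝕜] X →L[𝕜] X} {T : X →L[𝕜] X} {L : A →L[𝕜] A}
    (hTL : Implements π T L) {C : ℝ} (hC : ∀ a, ‖a‖ ≤ C * ‖π a‖) : ‖L‖ ≤ ‖π‖ * C * ‖T‖ := by
  rcases le_or_gt 0 C with C_nonneg | C_neg
  · refine L.opNorm_le_bound (by positivity) fun a => ?_
    calc ‖L a‖ ≤ C * ‖T * π a‖ := by rw [hTL]; exact hC _
      _ ≤ C * (‖T‖ * (‖π‖ * ‖a‖)) := by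
        gcongr
        exact norm_mul_le_of_le le_rfl (π.le_opNorm a)
      _ = ‖π‖ * C * ‖T‖ * ‖a‖ := by ring
  · -- A negative `C` forces the seminorm of `A` to vanish, so both sides are zero.
    have norm_nonpos (a : A) : ‖a‖ ≤ 0 :=
      (hC a).trans (mul_nonpos_of_nonpos_of_nonneg C_neg.le (norm_nonneg _))
    have norm_L_le : ‖L‖ ≤ 0 := L.opNorm_le_bound le_rfl fun a => by
      simpa only [zero_mul] using norm_nonpos (L a)
    have norm_π_le : ‖π‖ ≤ 0 := π.opNorm_le_bound le_rfl fun a => by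
      rw [zero_mul]
      exact (π.le_opNorm a).trans
        (mul_nonpos_of_nonneg_of_nonpos (norm_nonneg π) (norm_nonpos a))
    rwa [norm_π_le.antisymm (norm_nonneg π), zero_mul, zero_mul]

theorem Implements.map_unique {π : A →L[𝕜] X →L[𝕜] X} (hπ : Function.Injective π)
    {T : X →L[𝕜] X} {L K : A →L[𝕜] A} (hL : Implements π T L) (hK : Implements π T K) : L = K :=
  ContinuousLinearMap.ext fun a => hπ <| (hL a).symm.trans (hK a)

end Module

theorem Implements.operator_unique [SeminormedAddCommGroup A] [NormedSpace 𝕜 A]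
    [NormedAddCommGroup X] [NormedSpace 𝕜 X] {π : A →L[𝕜] X →L[𝕜] X}
    (hnd : Dense (Submodule.span 𝕜 (Set.range fun p : A × X => π p.1 p.2) : Set X))
    {S T : X →L[𝕜] X} {L : A →L[𝕜] A} (hS : Implements π S L) (hT : Implements π T L) :
    S = T := by
  refine ContinuousLinearMap.ext_on hnd ?_
  rintro _ ⟨⟨a, x⟩, rfl⟩
  exact DFunLike.congr_fun ((hS a).trans (hT a).symm) x

variable [NonUnitalSeminormedRing A] [NormedSpace 𝕜 A]
  [SeminormedAddCommGroup X] [NormedSpace 𝕜 X] {π : A →L[𝕜] X →L[𝕜] X}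
  {ι : Type*} {l : Filter ι} {e : ι → A}

theorem tendsto_apply_of_mem_span_s16 (hπ : ∀ a b, π (a * b) = π a * π b)
    (he : ∀ a, Tendsto (fun i => e i * a) l (𝓝 a)) {y : X}
    (hy : y ∈ Submodule.span 𝕜 (Set.range fun p : A × X => π p.1 p.2)) :
    Tendsto (fun i => π (e i) y) l (𝓝 y) := by
  induction hy using Submodule.span_induction with
  | mem y hy =>
    obtain ⟨⟨a, x⟩, rfl⟩ := hy
    have tendsto_map_mul : Tendsto (fun i => π (e i * a) x) l (𝓝 (π a x)) :=
      ((π.flip x).continuous.tendsto a).comp (he a)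
    simpa only [hπ, mul_apply_eq_comp] using tendsto_map_mul
  | zero => simp only [map_zero, tendsto_const_nhds]
  | add y z _ _ hy hz => simpa only [map_add] using hy.add hz
  | smul c y _ hy => simpa only [map_smul] using hy.const_smul c

theorem Implements.opNorm_operator_le {T : X →L[𝕜] X} {L : A →L[𝕜] A}
    (hTL : Implements π T L) (hπ : ∀ a b, π (a * b) = π a * π b)
    (hnd : Dense (Submodule.span 𝕜 (Set.range fun p : A × X => π p.1 p.2) : Set X))
    [l.NeBot] {m : ℝ} (he_bdd : ∀ᶠ i in l, ‖e i‖ ≤ m)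
    (he_lim : ∀ a, Tendsto (fun i => e i * a) l (𝓝 a)) : ‖T‖ ≤ m * ‖π‖ * ‖L‖ := by
  have m_nonneg : 0 ≤ m := he_bdd.exists.elim fun i hi => (norm_nonneg _).trans hi
  refine T.opNorm_le_bound (by positivity) fun x => ?_
  refine hnd.induction (P := fun y => ‖T y‖ ≤ m * ‖π‖ * ‖L‖ * ‖y‖) (fun y hy => ?_)
    (isClosed_le (by fun_prop) (by fun_prop)) x
  have tendsto_norm : Tendsto (fun i => ‖T (π (e i) y)‖) l (𝓝 ‖T y‖) :=
    ((T.continuous.tendsto y).comp (tendsto_apply_of_mem_span_s16 hπ he_lim hy)).norm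
  refine le_of_tendsto tendsto_norm (he_bdd.mono fun i hi => ?_)
  calc ‖T (π (e i) y)‖ = ‖π (L (e i)) y‖ := congrArg norm (DFunLike.congr_fun (hTL (e i)) y)
    _ ≤ ‖π‖ * ‖L (e i)‖ * ‖y‖ := π.le_opNorm₂ _ _
    _ ≤ ‖π‖ * (‖L‖ * m) * ‖y‖ := by gcongr; exact L.le_opNorm_of_le hi
    _ = m * ‖π‖ * ‖L‖ * ‖y‖ := by ring

end Implements

section LeftCentralizers

variable (𝕜 : Type*) {A : Type*} [NontriviallyNormedField 𝕜] [NonUnitalSeminormedRing A]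
  [NormedSpace 𝕜 A] [IsScalarTower 𝕜 A A]

variable (A) in
/-- The algebra `M_l(A)` of bounded left centralizers over an arbitrary nontrivially normed field;
over `ℝ` and `ℂ` its carrier is `LeftCentralizers 𝕜 A`. -/
def leftCentralizerAlgebra : Subalgebra 𝕜 (A →L[𝕜] A) where
  carrier := {L | ∀ a b : A, L (a * b) = L a * b}
  mul_mem' {L K} hL hK a b := by
    simp only [mul_apply_eq_comp, hK a b, hL (K a) b]
  add_mem' {L K} hL hK a b := by
    simp only [add_apply, hK a b, hL a b, add_mul]
  algebraMap_mem' c a b := by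
    simp only [ContinuousLinearMap.algebraMap_apply, smul_mul_assoc]

variable [SMulCommClass 𝕜 A A]

/-- The canonical map `λ : A → M_l(A)`, sending `a` to left multiplication by `a`. -/
noncomputable def leftCentralizerAlgebra.lmul (a : A) : leftCentralizerAlgebra 𝕜 A :=
  ⟨ContinuousLinearMap.mul 𝕜 A a, fun b c => (mul_assoc a b c).symm⟩

variable {𝕜}

theorem leftCentralizerAlgebra.mul_lmul (L : leftCentralizerAlgebra 𝕜 A) (a : A) :
    L * lmul 𝕜 a = lmul 𝕜 ((L : A →L[𝕜] A) a) :=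
  Subtype.ext <| ContinuousLinearMap.ext <| L.2 a

theorem leftCentralizerAlgebra.map_mul_map_lmul {M : Type*} [Mul M]
    (φ : leftCentralizerAlgebra 𝕜 A →ₙ* M) (L : leftCentralizerAlgebra 𝕜 A) (a : A) :
    φ L * φ (lmul 𝕜 a) = φ (lmul 𝕜 ((L : A →L[𝕜] A) a)) := by
  rw [← map_mul, mul_lmul]

end LeftCentralizers

section Embedding

variable {𝕜 A X : Type*} [NontriviallyNormedField 𝕜] [NonUnitalNormedRing A] [NormedSpace 𝕜 A]
  [IsScalarTower 𝕜 A A]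

theorem exists_leftCentralizer_implements [SeminormedAddCommGroup X] [NormedSpace 𝕜 X]
    {π : A →L[𝕜] X →L[𝕜] X} (hπ : ∀ a b, π (a * b) = π a * π b) {C : ℝ}
    (hC : ∀ a, ‖a‖ ≤ C * ‖π a‖) {T : X →L[𝕜] X} (hT : ∀ a, ∃ b, T * π a = π b) :
    ∃ L ∈ leftCentralizerAlgebra 𝕜 A, Implements π T L := by
  obtain ⟨L, hL⟩ := exists_comp_eq_of_range_subset hC ((ContinuousLinearMap.mul 𝕜 _ T).comp π) <|
    Set.range_subset_iff.2 fun a => (hT a).imp fun _ => Eq.symm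
  have map_L (a : A) : π (L a) = T * π a := DFunLike.congr_fun hL a
  refine ⟨L, fun a b => injective_of_norm_le_mul_norm_map hC ?_, fun a => (map_L a).symm⟩
  rw [map_L, hπ, hπ, map_L, mul_assoc]

variable [SMulCommClass 𝕜 A A] [NormedAddCommGroup X] [NormedSpace 𝕜 X]

theorem left_centralizers_embed_as_left_normalizer_general
    {m : ℝ} {ι : Type*} {l : Filter ι} [l.NeBot] {e : ι → A}
    (he_bdd : ∀ᶠ i in l, ‖e i‖ ≤ m) (he_lim : ∀ a, Tendsto (fun i => e i * a) l (𝓝 a))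
    {π : A →L[𝕜] X →L[𝕜] X} (hπ : ∀ a b, π (a * b) = π a * π b)
    (hnd : Dense (Submodule.span 𝕜 (Set.range fun p : A × X => π p.1 p.2) : Set X))
    {C : ℝ} (hC : ∀ a, ‖a‖ ≤ C * ‖π a‖)
    (πbl : leftCentralizerAlgebra 𝕜 A →ₙ* (X →L[𝕜] X))
    (hπbl : ∀ a, πbl (leftCentralizerAlgebra.lmul 𝕜 a) = π a) :
    (∀ (L : leftCentralizerAlgebra 𝕜 A) (a : A), πbl L * π a = π ((L : A →L[𝕜] A) a)) ∧
    Function.Injective πbl ∧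
    (∀ T : X →L[𝕜] X, (∀ a, ∃ b, T * π a = π b) →
      ∃ (L : A →L[𝕜] A) (hL : L ∈ leftCentralizerAlgebra 𝕜 A),
        πbl ⟨L, hL⟩ = T ∧ ∀ a, π (L a) = T * π a) ∧
    (∀ L : leftCentralizerAlgebra 𝕜 A, ‖πbl L‖ ≤ m * ‖π‖ * ‖(L : A →L[𝕜] A)‖) ∧
    (∀ L : leftCentralizerAlgebra 𝕜 A, ‖(L : A →L[𝕜] A)‖ ≤ ‖π‖ * C * ‖πbl L‖) := by
  have implements (L : leftCentralizerAlgebra 𝕜 A) : Implements π (πbl L) (L : A →L[𝕜] A) :=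
    fun a => by simpa only [hπbl] using leftCentralizerAlgebra.map_mul_map_lmul πbl L a
  refine ⟨implements, fun L K hLK => ?_, fun T hT => ?_,
    fun L => (implements L).opNorm_operator_le hπ hnd he_bdd he_lim,
    fun L => (implements L).opNorm_map_le hC⟩
  · exact Subtype.ext <| (implements L).map_unique (injective_of_norm_le_mul_norm_map hC) <|
      hLK ▸ implements K
  · obtain ⟨L, hL, hTL⟩ := exists_leftCentralizer_implements hπ hC hT
    exact ⟨L, hL, (implements ⟨L, hL⟩).operator_unique hnd hTL, fun a => (hTL a).symm⟩

end Embedding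

/-- **Embedding of the left centralizer algebra as the left normalizer.** Let `A` be a normed
algebra with an `m`-bounded approximate left identity, `X` a Banach space, and
`π_l : A → B(X)` an injective bounded homomorphism making `X` a non-degenerate faithful
normed left `A`-module, whose inverse `π_l⁻¹ : π_l(A) → A` is bounded (by `C`). Then the
unique homomorphism `π̄_l : M_l(A) → B(X)` with `π̄_l ∘ λ = π_l` is an algebra isomorphism
from `M_l(A)` onto the left normalizer `N_l(π_l(A), B(X))`, with `‖π̄_l‖ ≤ m‖π_l‖` and
`‖π̄_l⁻¹‖ ≤ ‖π_l‖·‖π_l⁻¹‖` for the operator norm of `B(X)`, the inverse being given by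
`π̄_l⁻¹(T)(a) = π_l⁻¹(T π_l(a))`. -/
theorem left_centralizers_embed_as_left_normalizer
    {𝕜 : Type*} [RCLike 𝕜]
    {A : Type*} [NonUnitalNormedRing A] [NormedSpace 𝕜 A]
    [IsScalarTower 𝕜 A A] [SMulCommClass 𝕜 A A]
    {X : Type*} [NormedAddCommGroup X] [NormedSpace 𝕜 X] [CompleteSpace X]
    (m : ℝ) {ι : Type*} (l : Filter ι) [l.NeBot] (e : ι → A)
    (he_bdd : ∀ i, ‖e i‖ ≤ m)
    (he_lim : ∀ a : A, Tendsto (fun i => e i * a) l (𝓝 a))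
    (π : A →L[𝕜] X →L[𝕜] X)
    (hπmul : ∀ a b : A, π (a * b) = π a * π b)
    (hπinj : Function.Injective π)
    (hnd : Dense (Submodule.span 𝕜 (Set.range fun p : A × X => π p.1 p.2) : Set X))
    (C : ℝ) (hC : ∀ a : A, ‖a‖ ≤ C * ‖π a‖)
    -- `π̄_l : M_l(A) → B(X)`, the canonical homomorphism with `π̄_l ∘ λ = π_l`
    (πbl : LeftCentralizers 𝕜 A → X →L[𝕜] X)
    (hπbl_add : ∀ (L K : LeftCentralizers 𝕜 A)
      (h : (L : A →L[𝕜] A) + K ∈ LeftCentralizers 𝕜 A),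
      πbl ⟨(L : A →L[𝕜] A) + K, h⟩ = πbl L + πbl K)
    (hπbl_smul : ∀ (c : 𝕜) (L : LeftCentralizers 𝕜 A)
      (h : c • (L : A →L[𝕜] A) ∈ LeftCentralizers 𝕜 A),
      πbl ⟨c • (L : A →L[𝕜] A), h⟩ = c • πbl L)
    (hπbl_mul : ∀ (L K : LeftCentralizers 𝕜 A)
      (h : (L : A →L[𝕜] A) * K ∈ LeftCentralizers 𝕜 A),
      πbl ⟨(L : A →L[𝕜] A) * K, h⟩ = πbl L * πbl K)
    (hπbl_lam : ∀ (a : A) (h : ContinuousLinearMap.mul 𝕜 A a ∈ LeftCentralizers 𝕜 A),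
      πbl ⟨ContinuousLinearMap.mul 𝕜 A a, h⟩ = π a) :
    -- `π̄_l` maps `M_l(A)` into the left normalizer of `π_l(A)`:
    (∀ (L : LeftCentralizers 𝕜 A) (a : A), πbl L * π a = π ((L : A →L[𝕜] A) a)) ∧
    -- `π̄_l` is injective,
    (∀ L K : LeftCentralizers 𝕜 A, πbl L = πbl K → L = K) ∧
    -- `π̄_l` is onto `N_l(π_l(A), B(X))`, with inverse `T ↦ (a ↦ π_l⁻¹(T π_l(a)))`:
    (∀ T : X →L[𝕜] X, (∀ a : A, ∃ b : A, T * π a = π b) →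
      ∃ (L : A →L[𝕜] A) (hL : L ∈ LeftCentralizers 𝕜 A),
        πbl ⟨L, hL⟩ = T ∧ ∀ a : A, π (L a) = T * π a) ∧
    -- `‖π̄_l‖ ≤ m ‖π_l‖` and `‖π̄_l⁻¹‖ ≤ ‖π_l‖ ‖π_l⁻¹‖`:
    (∀ L : LeftCentralizers 𝕜 A, ‖πbl L‖ ≤ m * ‖π‖ * ‖(L : A →L[𝕜] A)‖) ∧
    (∀ L : LeftCentralizers 𝕜 A, ‖(L : A →L[𝕜] A)‖ ≤ ‖π‖ * C * ‖πbl L‖) :=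
  left_centralizers_embed_as_left_normalizer_general (.of_forall he_bdd) he_lim hπmul hnd hC
    ⟨πbl, fun L K => hπbl_mul L K (L * K).2⟩
    fun a => hπbl_lam a (leftCentralizerAlgebra.lmul 𝕜 a).2
end
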